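/- Let m, k ≥ 1 and let (U_j)_{j=1}^{k} be cofinite ultrafilters on FIN_j such that for all 0 < j ≤ k and every nondecreasing surjection f : {0,…,k} → {0,…,j}, U_k + U_j = U_j + U_k = U_k and f(U_k) = U_j. For each j let V_j = U_j^{⊗m} be the m-fold Fubini power of U_j, an ultrafilter on FIN_j^[m]. Then for any sets A_j ∈ V_j (j = 1,…,k) there exists an infinite block sequence (b_n) in FIN_k such that TS_j(b_n)^[m] ⊆ A_j for every j = 1,2,…,k. -/

import Mathlib

/-!
Adjoin to the family the principal ultrafilter `U_0` at the zero function. Applying the tetris map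
`x ↦ min x (max l i)` to `U_k + U_i = U_k` or to `U_l + U_k = U_k` gives `U_l + U_i = U_{max l i}`
for all `l, i ≤ k`.

Consequently, if a set has measure one for `U_{max l i} ⊗ U_j ⊗ ⋯ ⊗ U_j` and `f` is a nondecreasing
surjection onto `{0,…,l}`, then for `U_k`-almost every `b` the set stays of measure one, now for
`U_i ⊗ U_j ⊗ ⋯ ⊗ U_j`, once `f ∘ b` has been added to the first coordinate. If `i` is not needed,
`f ∘ b` may instead be taken as the whole first coordinate, which shortens the product. Only
finitely many sets arise in this way from `b_0, …, b_{n-1}`, so `b_n` can be chosen to respect all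
of them. An element of `TS_j(b_n)^[m]` is read off by a run of such steps: within a block, `i` is
the highest level that is still to come.
-/

open Filter

/-- `FIN k`: finitely supported functions `ℕ → {0,…,k}` attaining the maximum value `k`. -/
def FIN (k : ℕ) : Set (ℕ → ℕ) :=
  {b | (∀ n, b n ≤ k) ∧ {n | b n ≠ 0}.Finite ∧ ∃ n, b n = k}

/-- `Supp b < Supp b'`. -/
def SuppLT (b b' : ℕ → ℕ) : Prop :=
  ∀ m, b m ≠ 0 → ∀ m', b' m' ≠ 0 → m < m'

/-- `f` is (the extension to `ℕ` of) a nondecreasing surjection `{0,…,k} → {0,…,j}`. -/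
def IsTetrisFn (k j : ℕ) (f : ℕ → ℕ) : Prop :=
  (∀ i i', i' ≤ i → i ≤ k → f i' ≤ f i) ∧ (∀ i, i ≤ k → f i ≤ j) ∧
    ∀ m, m ≤ j → ∃ i, i ≤ k ∧ f i = m

/-- An infinite block sequence in `FIN k`. -/
def IsBlockSeq (k : ℕ) (b : ℕ → ℕ → ℕ) : Prop :=
  (∀ n, b n ∈ FIN k) ∧ ∀ n, SuppLT (b n) (b (n + 1))

/-- An element of `FIN_k^[m]`: a block sequence in `FIN k` of length `m`. -/
def IsBlockTuple (k m : ℕ) (t : Fin m → ℕ → ℕ) : Prop :=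
  (∀ d, t d ∈ FIN k) ∧
    ∀ (d : ℕ) (h : d + 1 < m), SuppLT (t ⟨d, Nat.lt_of_succ_lt h⟩) (t ⟨d + 1, h⟩)

/-- The set `TS_j(b_n)^[m]`. -/
def TSm (k j m : ℕ) (b : ℕ → ℕ → ℕ) : Set (Fin m → ℕ → ℕ) :=
  {a | IsBlockTuple j m a ∧ ∃ (n : ℕ → ℕ) (js : ℕ → ℕ) (fs : ℕ → ℕ → ℕ),
    n 0 = 0 ∧ (∀ d, d < m → n d < n (d + 1)) ∧
    (∀ i, i < n m → js i ≤ k ∧ IsTetrisFn k (js i) (fs i)) ∧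
    ∀ d : Fin m,
      (∀ i, n d.val ≤ i → i < n (d.val + 1) → js i ≤ j) ∧
      (∃ i, n d.val ≤ i ∧ i < n (d.val + 1) ∧ js i = j) ∧
      a d = ∑ i ∈ Finset.Ico (n d.val) (n (d.val + 1)), (fs i) ∘ (b i)}

/-- An ultrafilter is cofinite if for every `n` the set of `b` with `b n = 0` belongs
to it. -/
def IsCofinite (U : Ultrafilter (ℕ → ℕ)) : Prop := ∀ n, {b : ℕ → ℕ | b n = 0} ∈ U

/-- `A ∈ U + V`. -/
def memSum (U V : Ultrafilter (ℕ → ℕ)) (A : Set (ℕ → ℕ)) : Prop :=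
  ∀ᶠ b in (U : Filter (ℕ → ℕ)), ∀ᶠ b' in (V : Filter (ℕ → ℕ)),
    SuppLT b b' ∧ b + b' ∈ A

/-- The generalized tetris operation `b ↦ f ∘ b`. -/
def tetrisMap (f : ℕ → ℕ) : (ℕ → ℕ) → ℕ → ℕ := fun b => f ∘ b

/-- Membership in the `m`-fold Fubini power `U^{⊗m}`: iterated ultrafilter
quantification `(U b₁) ⋯ (U b_m)`. -/
def FubMem (U : Ultrafilter (ℕ → ℕ)) : (m : ℕ) → Set (Fin m → ℕ → ℕ) → Prop
  | 0, A => (fun i => i.elim0) ∈ A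
  | m + 1, A => ∀ᶠ b in (U : Filter (ℕ → ℕ)), FubMem U m {t | Fin.cons b t ∈ A}

attribute [local instance] Ultrafilter.add

/-! ### Coherent families of ultrafilters -/

/-- A coherent family `W_0, …, W_k` of ultrafilters on `FIN_0, …, FIN_k`: the hypotheses of the
theorem, with the level `0` included. -/
structure IsCoherent (k : ℕ) (W : ℕ → Ultrafilter (ℕ → ℕ)) : Prop where
  FIN_mem : ∀ j ≤ k, FIN j ∈ W j
  cofinite : IsCofinite (W k)
  memSum_left : ∀ j ≤ k, ∀ A, memSum (W k) (W j) A ↔ A ∈ W k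
  memSum_right : ∀ j ≤ k, ∀ A, memSum (W j) (W k) A ↔ A ∈ W k
  map_eq : ∀ j ≤ k, ∀ f, IsTetrisFn k j f → (W k).map (tetrisMap f) = W j

lemma isTetrisFn_min {k j : ℕ} (hj : j ≤ k) : IsTetrisFn k j (min · j) :=
  ⟨fun _ _ h _ => min_le_min_right j h, fun _ _ => min_le_right _ _,
    fun m hm => ⟨m, hm.trans hj, min_eq_left hm⟩⟩

lemma tetrisMap_eq_zero {k : ℕ} {f b : ℕ → ℕ} (hf : IsTetrisFn k 0 f) (hb : b ∈ FIN k) :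
    tetrisMap f b = 0 :=
  funext fun x => Nat.le_zero.1 (hf.2.1 _ (hb.1 x))

lemma zero_mem_FIN_zero : (0 : ℕ → ℕ) ∈ FIN 0 :=
  ⟨fun _ => le_rfl, by simp, 0, rfl⟩

lemma suppLT_zero_left (b : ℕ → ℕ) : SuppLT 0 b := fun _ h => absurd rfl h

lemma suppLT_zero_right (b : ℕ → ℕ) : SuppLT b 0 := fun _ _ _ h => absurd rfl h

lemma isCoherent_update_zero {k : ℕ} (hk : 1 ≤ k) {U : ℕ → Ultrafilter (ℕ → ℕ)}
    (hU : ∀ j, 1 ≤ j → j ≤ k → FIN j ∈ U j ∧ IsCofinite (U j))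
    (hsum : ∀ j, 0 < j → j ≤ k →
      (∀ A : Set (ℕ → ℕ), memSum (U k) (U j) A ↔ A ∈ U k) ∧
      (∀ A : Set (ℕ → ℕ), memSum (U j) (U k) A ↔ A ∈ U k))
    (hmap : ∀ j, 0 < j → j ≤ k →
      ∀ f : ℕ → ℕ, IsTetrisFn k j f → (U k).map (tetrisMap f) = U j) :
    IsCoherent k (Function.update U 0 (pure 0)) := by
  have update_pos (j : ℕ) (hj : 0 < j) : Function.update U 0 (pure 0) j = U j :=
    Function.update_of_ne hj.ne' _ _
  have update_zero : Function.update U 0 (pure 0) 0 = pure 0 := Function.update_self ..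
  constructor
  case FIN_mem =>
    rintro (_ | j) hj
    · rw [update_zero]
      exact zero_mem_FIN_zero
    · rw [update_pos _ j.succ_pos]
      exact (hU _ j.succ_pos hj).1
  case cofinite =>
    rw [update_pos k hk]
    exact (hU k hk le_rfl).2
  case memSum_left =>
    rintro (_ | j) hj A
    · simp [update_pos k hk, memSum, suppLT_zero_right]
    · simpa [update_pos _ hk, update_pos _ j.succ_pos] using (hsum _ j.succ_pos hj).1 A
  case memSum_right =>
    rintro (_ | j) hj A
    · simp [update_pos k hk, memSum, suppLT_zero_left]
    · simpa [update_pos _ hk, update_pos _ j.succ_pos] using (hsum _ j.succ_pos hj).2 A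
  case map_eq =>
    rintro (_ | j) hj f hf
    · rw [update_zero, update_pos k hk]
      refine Ultrafilter.eq_of_le (le_pure_iff.2 (mem_map.2 ?_))
      filter_upwards [(hU k hk le_rfl).1] with b hb using tetrisMap_eq_zero hf hb
    · rw [update_pos k hk, update_pos _ j.succ_pos]
      exact hmap _ j.succ_pos hj f hf

lemma SuppLT.tetrisMap_add {b b' : ℕ → ℕ} (h : SuppLT b b') {f : ℕ → ℕ} (hf : f 0 = 0) :
    tetrisMap f (b + b') = tetrisMap f b + tetrisMap f b' := by
  funext x
  by_cases hb : b x = 0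
  · simp [tetrisMap, hb, hf]
  · have hb' : b' x = 0 := by
      by_contra hb'
      exact lt_irrefl x (h x hb x hb')
    simp [tetrisMap, hb', hf]

lemma map_tetrisMap_add_of_memSum {U V W : Ultrafilter (ℕ → ℕ)}
    (h : ∀ A, memSum U V A ↔ A ∈ W) {f : ℕ → ℕ} (hf : f 0 = 0) :
    U.map (tetrisMap f) + V.map (tetrisMap f) = W.map (tetrisMap f) := by
  refine Ultrafilter.eq_of_le fun A hA => ?_
  have hsum : memSum U V (tetrisMap f ⁻¹' A) := (h _).2 hA
  change ∀ᶠ b in U, ∀ᶠ b' in V, tetrisMap f b + tetrisMap f b' ∈ A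
  filter_upwards [hsum] with b hb
  filter_upwards [hb] with b' ⟨hbb', hmem⟩
  rwa [← hbb'.tetrisMap_add hf]

lemma map_min_eq_self {i l : ℕ} (hil : i ≤ l) {U : Ultrafilter (ℕ → ℕ)} (hU : FIN i ∈ U) :
    U.map (tetrisMap (min · l)) = U := by
  have hid : tetrisMap (min · l) =ᶠ[U] id := by
    filter_upwards [hU] with b hb using funext fun x => min_eq_left ((hb.1 x).trans hil)
  exact Ultrafilter.coe_injective ((map_congr hid).trans map_id)

lemma IsCoherent.add_eq {k : ℕ} {W : ℕ → Ultrafilter (ℕ → ℕ)} (hW : IsCoherent k W) {l i : ℕ}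
    (hl : l ≤ k) (hi : i ≤ k) : W l + W i = W (max l i) := by
  rcases le_total i l with hil | hli
  · rw [max_eq_left hil, ← hW.map_eq l hl _ (isTetrisFn_min hl)]
    conv_lhs => rw [← map_min_eq_self hil (hW.FIN_mem i hi)]
    exact map_tetrisMap_add_of_memSum (hW.memSum_left i hi) (Nat.zero_min l)
  · rw [max_eq_right hli, ← hW.map_eq i hi _ (isTetrisFn_min hi)]
    conv_lhs => rw [← map_min_eq_self hli (hW.FIN_mem l hl)]
    exact map_tetrisMap_add_of_memSum (hW.memSum_right l hl) (Nat.zero_min i)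

lemma IsCoherent.eventually_comp {k : ℕ} {W : ℕ → Ultrafilter (ℕ → ℕ)} (hW : IsCoherent k W)
    {l : ℕ} (hl : l ≤ k) {f : ℕ → ℕ} (hf : IsTetrisFn k l f) {p : (ℕ → ℕ) → Prop}
    (h : ∀ᶠ x in W l, p x) : ∀ᶠ b in W k, p (f ∘ b) := by
  rw [← hW.map_eq l hl f hf] at h
  exact h

lemma IsCofinite.eventually_suppLT {V : Ultrafilter (ℕ → ℕ)} (hV : IsCofinite V) {b : ℕ → ℕ}
    (hb : {n | b n ≠ 0}.Finite) : ∀ᶠ b' in V, SuppLT b b' := by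
  obtain ⟨M, hM⟩ := hb.bddAbove
  have h : ∀ᶠ b' in (V : Filter (ℕ → ℕ)), ∀ x ∈ Set.Iic M, b' x = 0 :=
    (eventually_all_finite (Set.finite_Iic M)).2 fun x _ => hV x
  filter_upwards [h] with b' hb' x hx y hy
  by_contra! hyx
  exact hy (hb' y (hyx.trans (hM hx)))

/-! ### Fubini products -/

/-- The Fubini product of a list of filters, as a filter on lists (of the same length): the
quantifier `∀ᶠ x₁ in F₁, …, ∀ᶠ xₙ in Fₙ` applied to properties of `[x₁, …, xₙ]`. -/
def fubiniProd {X : Type*} : List (Filter X) → Filter (List X)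
  | [] => pure []
  | F :: Fs => F.bind fun x => (fubiniProd Fs).map (x :: ·)

lemma eventually_fubiniProd_cons {X : Type*} {F : Filter X} {Fs : List (Filter X)}
    {p : List X → Prop} :
    (∀ᶠ w in fubiniProd (F :: Fs), p w) ↔ ∀ᶠ x in F, ∀ᶠ w in fubiniProd Fs, p (x :: w) :=
  Iff.rfl

lemma eventually_fubiniProd_replicate {U : Ultrafilter (ℕ → ℕ)} {m : ℕ}
    {p : List (ℕ → ℕ) → Prop} :
    (∀ᶠ w in fubiniProd (List.replicate m (U : Filter (ℕ → ℕ))), p w) ↔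
      FubMem U m {t | p (List.ofFn t)} := by
  induction m generalizing p with
  | zero => simp [fubiniProd, FubMem]
  | succ m ih => simp [List.replicate_succ, eventually_fubiniProd_cons, FubMem, ih]

/-! ### Requirements and moves -/

/-- A requirement on the tuples still to be built: `levels` are the levels of their entries and
`target` is the set they must belong to. While a block is under construction, the first entry
stands for its missing part. -/
structure Requirement where
  levels : List ℕ
  target : Set (List (ℕ → ℕ))

/-- A requirement is met generically if its target belongs to the Fubini product of the
ultrafilters of its levels. -/
def Requirement.Generic (W : ℕ → Ultrafilter (ℕ → ℕ)) (s : Requirement) : Prop :=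
  ∀ᶠ w in fubiniProd (s.levels.map fun i => (W i : Filter (ℕ → ℕ))), w ∈ s.target

/-- The nondecreasing surjections `{0,…,k} → {0,…,l}`, extended to `ℕ` by a constant, so that there
are only finitely many of them. -/
def tetrisFns (k l : ℕ) : Set (ℕ → ℕ) := {f | IsTetrisFn k l f ∧ ∀ x, f (min x k) = f x}

/-- `IsMove k s g`: using a tetris image `f ∘ b` of the next member `b` of the block sequence
reduces the requirement `s` to `g b`. Either `f ∘ b` is added to the current block, of which a part
of level `i` is then still missing, or it completes this block. -/
inductive IsMove (k : ℕ) : Requirement → ((ℕ → ℕ) → Requirement) → Prop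
  | extend {l i : ℕ} {f : ℕ → ℕ} {L : List ℕ} {B : Set (List (ℕ → ℕ))} (hl : l ≤ k) (hi : i ≤ k)
      (hf : f ∈ tetrisFns k l) :
      IsMove k ⟨max l i :: L, B⟩ fun b => ⟨i :: L, {w | w.modifyHead (f ∘ b + ·) ∈ B}⟩
  | complete {l : ℕ} {f : ℕ → ℕ} {L : List ℕ} {B : Set (List (ℕ → ℕ))} (hl : l ≤ k)
      (hf : f ∈ tetrisFns k l) :
      IsMove k ⟨l :: L, B⟩ fun b => ⟨L, {w | f ∘ b :: w ∈ B}⟩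

/-- `T n` collects requirements left over when `b 0, …, b (n - 1)` have been used, and every move
that uses `b n` leads from `T n` to `T (n + 1)`. -/
def IsClosedUnderMoves (k : ℕ) (b : ℕ → ℕ → ℕ) (T : ℕ → Set Requirement) : Prop :=
  ∀ n, ∀ s ∈ T n, ∀ g, IsMove k s g → g (b n) ∈ T (n + 1)

lemma tetrisFns_finite (k l : ℕ) : (tetrisFns k l).Finite := by
  let extendConst (g : Fin (k + 1) → Fin (l + 1)) (x : ℕ) : ℕ :=
    g ⟨min x k, Nat.lt_succ_of_le (min_le_right x k)⟩
  refine (Set.finite_range extendConst).subset fun f ⟨hf, hfk⟩ => ?_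
  exact ⟨fun x => ⟨f x, Nat.lt_succ_of_le (hf.2.1 x (Nat.le_of_lt_succ x.2))⟩, funext hfk⟩

lemma exists_mem_tetrisFns {k l : ℕ} {f b : ℕ → ℕ} (hf : IsTetrisFn k l f) (hb : ∀ x, b x ≤ k) :
    ∃ g ∈ tetrisFns k l, g ∘ b = f ∘ b := by
  have hmin {x : ℕ} (hx : x ≤ k) : f (min x k) = f x := by rw [min_eq_left hx]
  refine ⟨fun x => f (min x k), ⟨⟨fun i i' h _ => ?_, fun i _ => ?_, fun m hm => ?_⟩, ?_⟩, ?_⟩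
  · exact hf.1 _ _ (min_le_min_right k h) (min_le_right i k)
  · exact hf.2.1 _ (min_le_right i k)
  · obtain ⟨i, hi, rfl⟩ := hf.2.2 m hm
    exact ⟨i, hi, hmin hi⟩
  · simp
  · exact funext fun x => hmin (hb x)

lemma finite_setOf_isMove (k : ℕ) (s : Requirement) : {g | IsMove k s g}.Finite := by
  obtain ⟨_ | ⟨h, L⟩, B⟩ := s
  · exact Set.finite_empty.subset nofun
  let extension (i : ℕ) (f b : ℕ → ℕ) : Requirement :=
    ⟨i :: L, {w | w.modifyHead (f ∘ b + ·) ∈ B}⟩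
  let completion (f b : ℕ → ℕ) : Requirement := ⟨L, {w | f ∘ b :: w ∈ B}⟩
  have hfin : (⋃ l ∈ Set.Iic h, (⋃ i ∈ Set.Iic h, extension i '' tetrisFns k l) ∪
      completion '' tetrisFns k l).Finite :=
    (Set.finite_Iic h).biUnion fun l _ =>
      ((Set.finite_Iic h).biUnion fun i _ => (tetrisFns_finite k l).image _).union
        ((tetrisFns_finite k l).image _)
  refine hfin.subset fun g hg => ?_
  cases hg with
  | @extend l i f _ _ _ _ hf =>
    exact Set.mem_biUnion (le_max_left l i)
      (Or.inl (Set.mem_biUnion (le_max_right l i) ⟨f, hf, rfl⟩))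
  | @complete _ f _ _ _ hf => exact Set.mem_biUnion Set.self_mem_Iic (Or.inr ⟨f, hf, rfl⟩)

lemma IsCoherent.eventually_generic {k : ℕ} {W : ℕ → Ultrafilter (ℕ → ℕ)} (hW : IsCoherent k W)
    {s : Requirement} (hs : s.Generic W) {g : (ℕ → ℕ) → Requirement} (hg : IsMove k s g) :
    ∀ᶠ b in W k, (g b).Generic W := by
  cases hg with
  | @extend l i f L B hl hi hf =>
    have h_add : ∀ᶠ y in ↑(W l + W i), (⟨L, {w | y :: w ∈ B}⟩ : Requirement).Generic W := by
      rw [hW.add_eq hl hi]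
      exact hs
    have h_iter : ∀ᶠ x in W l,
        (⟨i :: L, {w | w.modifyHead (x + ·) ∈ B}⟩ : Requirement).Generic W := h_add
    exact hW.eventually_comp hl hf.1 h_iter
  | @complete l f L B hl hf =>
    have h_head : ∀ᶠ x in W l, (⟨L, {w | x :: w ∈ B}⟩ : Requirement).Generic W := hs
    exact hW.eventually_comp hl hf.1 h_head

/-! ### Recursive choice of the block sequence -/

/-- The states in `T n` are those of `T₀` and the successors of all earlier states; since there are
only finitely many, almost every choice of `x n` keeps all their own successors good. -/
theorem exists_seq_forall_good {X S : Type*} {V : Filter X} [V.NeBot] {F : Set X} {r : X → X → Prop}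
    {Good : S → Prop} {move : S → (X → S) → Prop} (hF : F ∈ V) (hr : ∀ x ∈ F, ∀ᶠ y in V, r x y)
    (hfin : ∀ s, {g | move s g}.Finite)
    (hmove : ∀ s, Good s → ∀ g, move s g → ∀ᶠ x in V, Good (g x))
    {T₀ : Set S} (hT₀ : T₀.Finite) (hgood : ∀ s ∈ T₀, Good s) :
    ∃ (x : ℕ → X) (T : ℕ → Set S), (∀ n, x n ∈ F) ∧ (∀ n, r (x n) (x (n + 1))) ∧ T₀ ⊆ T 0 ∧
      (∀ n, ∀ s ∈ T n, ∀ g, move s g → g (x n) ∈ T (n + 1)) ∧ ∀ n, ∀ s ∈ T n, Good s := by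
  let Admissible (p : X × Set S) : Prop :=
    p.1 ∈ F ∧ T₀ ⊆ p.2 ∧ p.2.Finite ∧ (∀ s ∈ p.2, Good s) ∧
      ∀ s ∈ p.2, ∀ g, move s g → Good (g p.1)
  let Precedes (p q : X × Set S) : Prop :=
    r p.1 q.1 ∧ ∀ s ∈ p.2, ∀ g, move s g → g p.1 ∈ q.2
  have step (P : Finset (X × Set S)) (hP : ∀ p ∈ P, Admissible p) :
      ∃ q, Admissible q ∧ ∀ p ∈ P, Precedes p q := by
    let successors (p : X × Set S) : Set S := ⋃ s ∈ p.2, (fun g => g p.1) '' {g | move s g}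
    let T : Set S := T₀ ∪ ⋃ p ∈ P, successors p
    have hTfin : T.Finite := hT₀.union <| P.finite_toSet.biUnion fun p hpP =>
      (hP p hpP).2.2.1.biUnion fun s _ => (hfin s).image _
    have hTgood : ∀ s ∈ T, Good s := by
      rintro s (hs | hs)
      · exact hgood s hs
      · simp only [successors, Set.mem_iUnion] at hs
        obtain ⟨p, hpP, s, hs, g, hg, rfl⟩ := hs
        obtain ⟨-, -, -, -, hsucc⟩ := hP p hpP
        exact hsucc s hs g hg
    have hgood' : ∀ᶠ x in V, ∀ s ∈ T, ∀ g ∈ {g | move s g}, Good (g x) :=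
      (eventually_all_finite hTfin).2 fun s hs =>
        (eventually_all_finite (hfin s)).2 (hmove s (hTgood s hs))
    have hr' : ∀ᶠ x in V, ∀ p ∈ P, r p.1 x :=
      (eventually_all_finset P).2 fun p hp => hr p.1 (hP p hp).1
    obtain ⟨x, hxgood, hxr, hxF⟩ := (hgood'.and (hr'.and hF)).exists
    refine ⟨(x, T), ⟨hxF, Set.subset_union_left, hTfin, hTgood, hxgood⟩,
      fun p hp => ⟨hxr p hp, fun s hs g hg => Or.inr ?_⟩⟩
    exact Set.mem_biUnion hp (Set.mem_biUnion hs ⟨g, hg, rfl⟩)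
  obtain ⟨p, hp, hlt⟩ := exists_seq_of_forall_finset_exists Admissible Precedes step
  exact ⟨fun n => (p n).1, fun n => (p n).2, fun n => (hp n).1,
    fun n => (hlt n (n + 1) n.lt_succ_self).1, (hp 0).2.1,
    fun n => (hlt n (n + 1) n.lt_succ_self).2, fun n => (hp n).2.2.2.1⟩

lemma IsCoherent.exists_blockSeq {k : ℕ} {W : ℕ → Ultrafilter (ℕ → ℕ)} (hW : IsCoherent k W)
    {T₀ : Set Requirement} (hT₀ : T₀.Finite) (hgen : ∀ s ∈ T₀, s.Generic W) :
    ∃ (b : ℕ → ℕ → ℕ) (T : ℕ → Set Requirement), IsBlockSeq k b ∧ T₀ ⊆ T 0 ∧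
      IsClosedUnderMoves k b T ∧ ∀ n, ∀ s ∈ T n, s.Generic W := by
  obtain ⟨b, T, hbF, hb, hTT⟩ := exists_seq_forall_good (Good := (·.Generic W))
    (hW.FIN_mem k le_rfl) (fun b hb => hW.cofinite.eventually_suppLT hb.2.1) (finite_setOf_isMove k)
    (fun s hs g hg => hW.eventually_generic hs hg) hT₀ hgen
  exact ⟨b, T, ⟨hbF, hb⟩, hTT⟩

/-! ### Elements of `TS_j` as runs of moves -/

section Run

variable {k : ℕ} {b : ℕ → ℕ → ℕ} {T : ℕ → Set Requirement} {js : ℕ → ℕ} {fs : ℕ → ℕ → ℕ}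

lemma complete_block_mem (hb : ∀ n x, b n x ≤ k) (hT : IsClosedUnderMoves k b T)
    {e : ℕ} (hf : ∀ i < e, js i ≤ k ∧ IsTetrisFn k (js i) (fs i)) {L : List ℕ}
    {p : ℕ} (hpe : p < e) {B : Set (List (ℕ → ℕ))}
    (hs : ⟨(Finset.Ico p e).sup js :: L, B⟩ ∈ T p) :
    ⟨L, {w | (∑ i ∈ Finset.Ico p e, fs i ∘ b i) :: w ∈ B}⟩ ∈ T e := by
  obtain ⟨hjk, hfp⟩ := hf p hpe
  obtain ⟨g, hg, hgb⟩ := exists_mem_tetrisFns hfp (hb p)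
  obtain rfl | hpe' : p + 1 = e ∨ p + 1 < e := by omega
  · simp only [Nat.Ico_succ_singleton, Finset.sup_singleton] at hs
    simpa [hgb] using hT p _ hs _ (.complete hjk hg)
  · have hsup : (Finset.Ico (p + 1) e).sup js ≤ k :=
      Finset.sup_le fun i hi => (hf i (Finset.mem_Ico.1 hi).2).1
    rw [← Finset.insert_Ico_add_one_left_eq_Ico hpe, Finset.sup_insert] at hs
    have hs' := hT p _ hs _ (.extend hjk hsup hg)
    have hrest := complete_block_mem hb hT hf hpe' hs'
    simpa [hgb, Finset.sum_eq_sum_Ico_succ_bot hpe] using hrest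
termination_by e - p

lemma ofFn_mem_of_runs {W : ℕ → Ultrafilter (ℕ → ℕ)} (hb : ∀ n x, b n x ≤ k)
    (hT : IsClosedUnderMoves k b T) (hgen : ∀ n, ∀ s ∈ T n, s.Generic W)
    {m j : ℕ} {n : ℕ → ℕ} {a : Fin m → ℕ → ℕ}
    {B : Set (List (ℕ → ℕ))} (hs : ⟨List.replicate m j, B⟩ ∈ T (n 0))
    (hn : ∀ d < m, n d < n (d + 1))
    (hf : ∀ d < m, ∀ i < n (d + 1), js i ≤ k ∧ IsTetrisFn k (js i) (fs i))
    (hj : ∀ d < m, (Finset.Ico (n d) (n (d + 1))).sup js = j)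
    (ha : ∀ d : Fin m, a d = ∑ i ∈ Finset.Ico (n d) (n (d + 1)), fs i ∘ b i) :
    List.ofFn a ∈ B := by
  induction m generalizing n B with
  | zero => simpa [Requirement.Generic, fubiniProd] using hgen _ _ hs
  | succ m ih =>
    have hs' : ⟨List.replicate m j, {w | a 0 :: w ∈ B}⟩ ∈ T (n 1) := by
      rw [List.replicate_succ, ← hj 0 m.succ_pos] at hs
      simpa [ha 0, hj 0] using complete_block_mem hb hT (hf 0 m.succ_pos) (hn 0 m.succ_pos) hs
    rw [List.ofFn_succ]
    exact ih (n := fun d => n (d + 1)) hs' (fun d hd => hn _ (Nat.succ_lt_succ hd))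
      (fun d hd => hf _ (Nat.succ_lt_succ hd)) (fun d hd => hj _ (Nat.succ_lt_succ hd))
      (fun d => ha d.succ)

lemma ofFn_mem_of_mem_TSm {W : ℕ → Ultrafilter (ℕ → ℕ)} (hb : IsBlockSeq k b)
    (hT : IsClosedUnderMoves k b T) (hgen : ∀ n, ∀ s ∈ T n, s.Generic W)
    {m j : ℕ} {B : Set (List (ℕ → ℕ))}
    (hs : ⟨List.replicate m j, B⟩ ∈ T 0) {a : Fin m → ℕ → ℕ} (ha : a ∈ TSm k j m b) :
    List.ofFn a ∈ B := by
  obtain ⟨-, n, js, fs, hn0, hn, hf, hblock⟩ := ha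
  have hmono : StrictMonoOn n (Set.Iic m) := strictMonoOn_Iic_of_lt_succ hn
  have hfs : ∀ d < m, ∀ i < n (d + 1), js i ≤ k ∧ IsTetrisFn k (js i) (fs i) := fun d hd i hi =>
    hf i (hi.trans_le (hmono.monotoneOn hd Set.self_mem_Iic hd))
  have hjs : ∀ d < m, (Finset.Ico (n d) (n (d + 1))).sup js = j := by
    intro d hd
    obtain ⟨hle, ⟨i, hi, hi', hij⟩, -⟩ := hblock ⟨d, hd⟩
    refine le_antisymm (Finset.sup_le fun i' hmem => ?_) ?_
    · exact hle i' (Finset.mem_Ico.1 hmem).1 (Finset.mem_Ico.1 hmem).2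
    · exact hij ▸ Finset.le_sup (Finset.mem_Ico.2 ⟨hi, hi'⟩)
  exact ofFn_mem_of_runs (fun i => (hb.1 i).1) hT hgen (by rwa [hn0]) hn hfs hjs
    fun d => (hblock d).2.2

end Run

/-- Given coherent cofinite ultrafilters `U_1, …, U_k` as in the key lemma, and sets
`A_j` belonging to the Fubini power `V_j = U_j^{⊗m}` (an ultrafilter on `FIN_j^[m]`),
there is an infinite block sequence `(b_n)` in `FIN k` with `TS_j(b_n)^[m] ⊆ A_j` for
every `j = 1,…,k`. -/
theorem multidim_block_sequence_from_fubini_powers (m k : ℕ) (hm : 1 ≤ m) (hk : 1 ≤ k)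
    (U : ℕ → Ultrafilter (ℕ → ℕ))
    (hU : ∀ j, 1 ≤ j → j ≤ k → FIN j ∈ U j ∧ IsCofinite (U j))
    (hsum : ∀ j, 0 < j → j ≤ k →
      (∀ A : Set (ℕ → ℕ), memSum (U k) (U j) A ↔ A ∈ U k) ∧
      (∀ A : Set (ℕ → ℕ), memSum (U j) (U k) A ↔ A ∈ U k))
    (hmap : ∀ j, 0 < j → j ≤ k →
      ∀ f : ℕ → ℕ, IsTetrisFn k j f → (U k).map (tetrisMap f) = U j)
    (A : ℕ → Set (Fin m → ℕ → ℕ))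
    (hA : ∀ j, 1 ≤ j → j ≤ k → FubMem (U j) m {t | IsBlockTuple j m t ∧ t ∈ A j}) :
    ∃ b : ℕ → ℕ → ℕ, IsBlockSeq k b ∧ ∀ j, 1 ≤ j → j ≤ k → TSm k j m b ⊆ A j := by
  have hW := isCoherent_update_zero hk hU hsum hmap
  let goal (j : ℕ) : Requirement :=
    ⟨List.replicate m j, List.ofFn '' {t | IsBlockTuple j m t ∧ t ∈ A j}⟩
  have goal_generic : ∀ s ∈ goal '' Set.Icc 1 k, s.Generic (Function.update U 0 (pure 0)) := by
    rintro _ ⟨j, ⟨hj1, hjk⟩, rfl⟩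
    have hj0 : j ≠ 0 := Nat.ne_of_gt hj1
    simpa [goal, Requirement.Generic, hj0, eventually_fubiniProd_replicate,
      List.ofFn_injective.eq_iff] using hA j hj1 hjk
  obtain ⟨b, T, hb, hT0, hT, hgen⟩ :=
    hW.exists_blockSeq ((Set.finite_Icc 1 k).image goal) goal_generic
  refine ⟨b, hb, fun j hj1 hjk a ha => ?_⟩
  have hmem : List.ofFn a ∈ (goal j).target :=
    ofFn_mem_of_mem_TSm hb hT hgen (hT0 ⟨j, ⟨hj1, hjk⟩, rfl⟩) ha
  exact ((List.ofFn_injective.mem_set_image).1 hmem).2
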